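/- Let k ≥ 2 and n_1, …, n_k be positive integers, and let t be the number of indices i with n_i odd. If t is even and t ≥ 2, then the signed total domination number of the complete k-partite graph K_{n_1,…,n_k} equals 2. -/

import Mathlib

open scoped Classical

/-- The signed total domination number of a finite simple graph `G`: the minimum weight of a
function `f : V → {−1, 1}` such that `f(N(v)) ≥ 1` for every vertex `v`. -/
noncomputable def signedTotalDomNum {V : Type*} [Fintype V] (G : SimpleGraph V) : ℤ :=
  sInf {w : ℤ | ∃ f : V → ℤ, (∀ v, f v = 1 ∨ f v = -1) ∧
    (∀ v, 1 ≤ ∑ u ∈ G.neighborFinset v, f u) ∧ w = ∑ v, f v}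

/-!
In a complete multipartite graph, the sum of `f` over `N(v)` is the weight `w` minus the sum of `f`
over the part of `v`. So `f` is dominating exactly when the part sums of nonempty parts are at most
`w - 1`. If `w ≤ 1`, then every part sum is at most `0`, so that `w`, the sum of all of them, is at
most the sum of any single part, hence at most `w - 1`; this is absurd. Conversely, when the number
`t ≥ 2` of odd parts is even, signs can be given to the odd parts with total `2`; prescribing these
signs as the sums of the odd parts, and `0` as the sum of the even ones, gives weight `2`.
-/

open Finset SimpleGraph

/-- A signed total dominating function of `G`, encoded as an integer-valued function whose values
are `1` and `-1`. -/
structure IsSignedTotalDominating {V : Type*} [Fintype V] (G : SimpleGraph V) (f : V → ℤ) :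
    Prop where
  eq_one_or_eq_neg_one : ∀ v, f v = 1 ∨ f v = -1
  one_le_sum_neighborFinset : ∀ v, 1 ≤ ∑ u ∈ G.neighborFinset v, f u

theorem IsSignedTotalDominating.signedTotalDomNum_eq {V : Type*} [Fintype V] {G : SimpleGraph V}
    {f : V → ℤ} (hf : IsSignedTotalDominating G f)
    (hmin : ∀ g, IsSignedTotalDominating G g → ∑ v, f v ≤ ∑ v, g v) :
    signedTotalDomNum G = ∑ v, f v := by
  refine IsLeast.csInf_eq ⟨⟨f, hf.1, hf.2, rfl⟩, ?_⟩
  rintro _ ⟨g, hsign, hdom, rfl⟩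
  exact hmin g ⟨hsign, hdom⟩

theorem exists_sign_sum_eq {α : Type*} (S : Finset α) {s : ℤ} (hs : |s| ≤ #S)
    (hparity : Even (s + #S)) :
    ∃ f : α → ℤ, (∀ a, f a = 1 ∨ f a = -1) ∧ ∑ a ∈ S, f a = s := by
  obtain ⟨p, hp⟩ := hparity
  obtain ⟨hs_lower, hs_upper⟩ := abs_le.1 hs
  lift p to ℕ using by lia
  obtain ⟨A, hAS, hA⟩ := exists_subset_card_eq (show p ≤ #S by lia)
  refine ⟨fun a => if a ∈ A then 1 else -1, fun a => ite_eq_or_eq _ _ _, ?_⟩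
  calc ∑ a ∈ S, (if a ∈ A then 1 else -1 : ℤ)
      = ∑ a ∈ S \ A, (-1 : ℤ) + ∑ a ∈ A, 1 := by
        rw [← sum_sdiff hAS]
        congr 1
        · exact sum_congr rfl fun a ha => if_neg (mem_sdiff.1 ha).2
        · exact sum_congr rfl fun a ha => if_pos ha
    _ = s := by
        simp only [sum_const, card_sdiff_of_subset hAS, hA, nsmul_eq_mul]
        lia

theorem exists_abs_le_one_even_add_sum_eq {ι : Type*} [Fintype ι] (n : ι → ℕ) {m : ℤ}
    (hm : |m| ≤ #{i | Odd (n i)}) (hparity : Even (m + #{i | Odd (n i)})) :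
    ∃ s : ι → ℤ, (∀ i, |s i| ≤ 1) ∧ (∀ i, |s i| ≤ n i) ∧ (∀ i, Even (s i + n i)) ∧
      ∑ i, s i = m := by
  obtain ⟨σ, hσ, hσsum⟩ := exists_sign_sum_eq _ hm hparity
  have habs (i : ι) : |σ i| = 1 := (abs_eq zero_le_one).2 (hσ i)
  have hodd (i : ι) : Odd (σ i) := by
    rcases hσ i with h | h <;> rw [h] <;> decide
  refine ⟨fun i => if Odd (n i) then σ i else 0, fun i => ?_, fun i => ?_, fun i => ?_,
    by rw [← sum_filter, hσsum]⟩
  · dsimp only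
    split_ifs <;> simp [habs]
  · dsimp only
    split_ifs with hi
    · rw [habs]
      exact_mod_cast hi.pos
    · simp
  · dsimp only
    split_ifs with hi
    · exact (hodd i).add_odd (by exact_mod_cast hi)
    · simpa using hi

section CompleteMultipartite

variable {ι : Type*} [Fintype ι] {V : ι → Type*} [∀ i, Fintype (V i)]

theorem sum_neighborFinset_completeMultipartiteGraph {M : Type*} [AddCommGroup M]
    (f : (Σ i, V i) → M) (v : Σ i, V i) [Fintype ((completeMultipartiteGraph V).neighborSet v)] :
    ∑ u ∈ (completeMultipartiteGraph V).neighborFinset v, f u =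
      ∑ u, f u - ∑ x, f ⟨v.1, x⟩ := by
  have hN : (completeMultipartiteGraph V).neighborFinset v =
      (univ.map (Function.Embedding.sigmaMk v.1))ᶜ := by
    ext ⟨i, x⟩
    obtain ⟨j, y⟩ := v
    by_cases hij : j = i
    · subst hij
      simp
    · simp [hij]
  rw [hN, eq_sub_iff_add_eq', ← sum_add_sum_compl (univ.map (Function.Embedding.sigmaMk v.1)) f,
    sum_map]
  rfl

theorem IsSignedTotalDominating.two_le_sum [Nonempty (Σ i, V i)] {f : (Σ i, V i) → ℤ}
    (hf : IsSignedTotalDominating (completeMultipartiteGraph V) f) : 2 ≤ ∑ v, f v := by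
  have part_sum_lt (v : Σ i, V i) : ∑ x, f ⟨v.1, x⟩ < ∑ u, f u := by
    have hv := hf.one_le_sum_neighborFinset v
    rw [sum_neighborFinset_completeMultipartiteGraph] at hv
    lia
  by_contra! hlt
  have part_sum_nonpos (i : ι) : ∑ x, f ⟨i, x⟩ ≤ 0 := by
    cases isEmpty_or_nonempty (V i) with
    | inl _ => simp only [univ_eq_empty, sum_empty, le_refl]
    | inr h => linarith [part_sum_lt ⟨i, h.some⟩]
  obtain ⟨v⟩ := ‹Nonempty (Σ i, V i)›
  refine (part_sum_lt v).not_ge ?_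
  calc ∑ u, f u = ∑ i, ∑ x, f ⟨i, x⟩ := Fintype.sum_sigma f
    _ = ∑ x, f ⟨v.1, x⟩ + ∑ i ∈ univ.erase v.1, ∑ x, f ⟨i, x⟩ :=
      (add_sum_erase univ _ (mem_univ v.1)).symm
    _ ≤ ∑ x, f ⟨v.1, x⟩ :=
      add_le_of_nonpos_right (sum_nonpos fun i _ => part_sum_nonpos i)

theorem exists_isSignedTotalDominating_sum_eq {s : ι → ℤ} (hs : ∀ i, |s i| ≤ Fintype.card (V i))
    (hparity : ∀ i, Even (s i + Fintype.card (V i))) (hlt : ∀ i, s i < ∑ j, s j) :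
    ∃ f, IsSignedTotalDominating (completeMultipartiteGraph V) f ∧ ∑ v, f v = ∑ i, s i := by
  choose f hsign hpart using fun i => exists_sign_sum_eq (univ : Finset (V i)) (hs i) (hparity i)
  have hsum : ∑ v : Σ i, V i, f v.1 v.2 = ∑ i, s i := by
    simp only [Fintype.sum_sigma, hpart]
  refine ⟨fun v => f v.1 v.2, ⟨fun v => hsign v.1 v.2, fun v => ?_⟩, hsum⟩
  rw [sum_neighborFinset_completeMultipartiteGraph, hsum, hpart]
  linarith [hlt v.1]

theorem signedTotalDomNum_eq_two_general (heven : Even #{i | Odd (Fintype.card (V i))})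
    (htwo : 2 ≤ #{i | Odd (Fintype.card (V i))}) :
    signedTotalDomNum (completeMultipartiteGraph V) = 2 := by
  obtain ⟨s, hs_one, hs_card, hparity, hs_sum⟩ :=
    exists_abs_le_one_even_add_sum_eq (fun i => Fintype.card (V i)) (m := 2)
      (by exact_mod_cast htwo) (even_two.add (by exact_mod_cast heven))
  have hlt (i : ι) : s i < ∑ j, s j := by linarith [le_of_abs_le (hs_one i)]
  obtain ⟨f, hf, hfsum⟩ := exists_isSignedTotalDominating_sum_eq hs_card hparity hlt
  obtain ⟨i, hi⟩ := card_pos.1 (two_pos.trans_le htwo)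
  obtain ⟨x⟩ := Fintype.card_pos_iff.1 (mem_filter.1 hi).2.pos
  have : Nonempty (Σ i, V i) := ⟨⟨i, x⟩⟩
  replace hfsum : ∑ v, f v = 2 := hfsum.trans hs_sum
  rw [hf.signedTotalDomNum_eq fun g hg => hfsum ▸ hg.two_le_sum, hfsum]

end CompleteMultipartite

theorem signedTotalDomNum_eq_two
    (k : ℕ) (hk : 2 ≤ k) (n : Fin k → ℕ) (hn : ∀ i, 0 < n i)
    (t : ℕ) (ht : t = (Finset.univ.filter fun i => Odd (n i)).card)
    (hteven : Even t) (ht2 : 2 ≤ t) :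
    signedTotalDomNum (SimpleGraph.completeMultipartiteGraph fun i : Fin k => Fin (n i)) = 2 := by
  subst ht
  apply signedTotalDomNum_eq_two_general <;> simpa only [Fintype.card_fin]
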